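/- For n ≥ 1, the operators E_1, …, E_{n−1} on (ℂ²)^{⊗n} satisfy the Temperley–Lieb relations: E_i² = −(t² + t⁻²) E_i for all i; E_i E_{i±1} E_i = E_i whenever both indices lie in {1, …, n−1}; and E_i E_j = E_j E_i whenever |i − j| ≥ 2. -/

import Mathlib

open scoped TensorProduct
open Complex

noncomputable section

/-- The four generators `X`, `Y`, `K`, `K⁻¹` of the algebra `Aₜ`. -/
inductive QGen : Type
  | X | Y | K | K'
  deriving DecidableEq

/-- The image of a generator in the free algebra on the generators. -/
def qg (x : QGen) : FreeAlgebra ℂ QGen := FreeAlgebra.ι ℂ x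

/-- The defining relations of `Aₜ`:
`KX = t²XK`, `KY = t⁻²YK`, `XY − YX = (K² − K⁻²)/(t² − t⁻²)`, `KK⁻¹ = K⁻¹K = 1`. -/
inductive QRel (t : ℂ) : FreeAlgebra ℂ QGen → FreeAlgebra ℂ QGen → Prop
  | KX : QRel t (qg .K * qg .X) ((t ^ 2 : ℂ) • (qg .X * qg .K))
  | KY : QRel t (qg .K * qg .Y) ((t⁻¹ ^ 2 : ℂ) • (qg .Y * qg .K))
  | XY : QRel t (qg .X * qg .Y - qg .Y * qg .X)
      (((t ^ 2 - t⁻¹ ^ 2)⁻¹ : ℂ) • (qg .K * qg .K - qg .K' * qg .K'))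
  | KK' : QRel t (qg .K * qg .K') 1
  | K'K : QRel t (qg .K' * qg .K) 1

/-- The algebra `Aₜ`: the quotient of the free algebra by the defining relations. -/
abbrev At (t : ℂ) : Type := RingQuot (QRel t)

/-- The generator `X` in `Aₜ`. -/
def aX (t : ℂ) : At t := RingQuot.mkAlgHom ℂ (QRel t) (qg .X)
/-- The generator `Y` in `Aₜ`. -/
def aY (t : ℂ) : At t := RingQuot.mkAlgHom ℂ (QRel t) (qg .Y)
/-- The generator `K` in `Aₜ`. -/
def aK (t : ℂ) : At t := RingQuot.mkAlgHom ℂ (QRel t) (qg .K)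
/-- The generator `K⁻¹` in `Aₜ`. -/
def aK' (t : ℂ) : At t := RingQuot.mkAlgHom ℂ (QRel t) (qg .K')

/-- The quantum integer `[n] = (t^{2n} − t^{−2n})/(t² − t⁻²)`. -/
def qint (t : ℂ) (n : ℤ) : ℂ := (t ^ (2 * n) - t ^ (-(2 * n))) / (t ^ 2 - t⁻¹ ^ 2)

/-- The matrix of `ρ_m(K)`: `K e_j = t^{m−2j} e_j`. -/
def Kmat (t : ℂ) (m : ℕ) : Matrix (Fin (m + 1)) (Fin (m + 1)) ℂ :=
  Matrix.diagonal fun j => t ^ ((m : ℤ) - 2 * (j : ℤ))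

/-- The matrix of `ρ_m(K⁻¹)`: `K⁻¹ e_j = t^{−(m−2j)} e_j`. -/
def K'mat (t : ℂ) (m : ℕ) : Matrix (Fin (m + 1)) (Fin (m + 1)) ℂ :=
  Matrix.diagonal fun j => t ^ (-((m : ℤ) - 2 * (j : ℤ)))

/-- The matrix of `ρ_m(X)`: `X e_j = [j] e_{j−1}` (with `e_{−1} = 0`). -/
def Xmat (t : ℂ) (m : ℕ) : Matrix (Fin (m + 1)) (Fin (m + 1)) ℂ :=
  Matrix.of fun i j => if (j : ℕ) = (i : ℕ) + 1 then qint t (j : ℤ) else 0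

/-- The matrix of `ρ_m(Y)`: `Y e_j = [m−j] e_{j+1}` (with `e_{m+1} = 0`). -/
def Ymat (t : ℂ) (m : ℕ) : Matrix (Fin (m + 1)) (Fin (m + 1)) ℂ :=
  Matrix.of fun i j => if (i : ℕ) = (j : ℕ) + 1 then qint t ((m : ℤ) - (j : ℤ)) else 0

/-- `ρ` is the representation `ρ_m : Aₜ → M_{m+1}(ℂ)` determined by the matrices above. -/
def IsRho (t : ℂ) (m : ℕ) (ρ : At t →ₐ[ℂ] Matrix (Fin (m + 1)) (Fin (m + 1)) ℂ) : Prop :=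
  ρ (aX t) = Xmat t m ∧ ρ (aY t) = Ymat t m ∧ ρ (aK t) = Kmat t m ∧ ρ (aK' t) = K'mat t m

/-- The `n`-fold tensor power `1̲^{⊗n} = (ℂ²)^{⊗n}`, realized concretely as the space of
ℂ-valued functions on the set of multi-indices `(Fin 2)ⁿ` (the basis vector
`e_{s 0} ⊗ ⋯ ⊗ e_{s (n−1)}` corresponds to the delta function at `s`). -/
abbrev Vn (n : ℕ) : Type := (Fin n → Fin 2) → ℂ

/-- Pointwise multiplication by a fixed function, as a linear endomorphism. -/
def ptwiseMul {α : Type} (c : α → ℂ) : (α → ℂ) →ₗ[ℂ] (α → ℂ) where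
  toFun f := fun u => c u * f u
  map_add' f g := by funext u; simp [mul_add]
  map_smul' r f := by funext u; simp [smul_eq_mul]; ring

/-- The coefficients of `μ`: `μ(e_a ⊗ e_b) = muC a b`, i.e. `μ(e_{1/2}⊗e_{−1/2}) = it`,
`μ(e_{−1/2}⊗e_{1/2}) = −it⁻¹`, `0` otherwise (recall `e_{1/2} = e₀`, `e_{−1/2} = e₁`). -/
def muC (t : ℂ) : Fin 2 → Fin 2 → ℂ :=
  ![![0, Complex.I * t], ![-(Complex.I * t⁻¹), 0]]

/-- The coefficients of `η`: `η(1) = ∑_{a,b} etaC a b • e_a ⊗ e_b`, i.e.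
`η(1) = it·e_{1/2}⊗e_{−1/2} − it⁻¹·e_{−1/2}⊗e_{1/2}`. -/
def etaC (t : ℂ) : Fin 2 → Fin 2 → ℂ :=
  ![![0, Complex.I * t], ![-(Complex.I * t⁻¹), 0]]

/-- The Temperley–Lieb generator `E = id^{⊗i} ⊗ (η∘μ) ⊗ id^{⊗(n−i−2)}` acting on
`1̲^{⊗n}`, where `η∘μ` acts on the tensor factors in positions `i` and `i+1`
(`0`-indexed; this is `E_{i+1}` in the `1`-indexed labelling). On basis vectors,
`E (e_{s}) = μ(e_{s i} ⊗ e_{s (i+1)}) · ∑_{a b} etaC a b • e_{s[i:=a][i+1:=b]}`,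
which in function coordinates is the formula below. -/
def TLE (t : ℂ) (n i : ℕ) (h : i + 1 < n) : Module.End ℂ (Vn n) :=
  (ptwiseMul fun u => etaC t (u ⟨i, Nat.lt_of_succ_lt h⟩) (u ⟨i + 1, h⟩)) ∘ₗ
    ∑ a : Fin 2, ∑ b : Fin 2, muC t a b •
      LinearMap.funLeft ℂ ℂ (fun u =>
        Function.update (Function.update u (⟨i, Nat.lt_of_succ_lt h⟩ : Fin n) a)
          (⟨i + 1, h⟩ : Fin n) b)

/-!
Let `M` and `N` be the matrices of the pairing `μ` and of the copairing `η`. Closing a copairing by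
the pairing on the same two factors gives the scalar `tr (M Nᵀ)`, whence the quadratic relation. If
`M N = 1`, a copairing on the factors `p, q` followed by a pairing on `q, r` only transports the
tensor factor from `r` to `p`; a copairing on `q, r` and a pairing on `p, q` transport it back,
which gives the cubic relations. For the given `μ` and `η` one has `M N = 1` because
`(i t) (-i t⁻¹) = 1`.
-/

section Contraction

open Function LinearMap
open scoped Matrix

variable {R ι κ : Type*} [CommSemiring R] [DecidableEq ι] [Fintype κ]

/-- The contraction of the tensor factors `p` and `q` by the bilinear form with Gram matrix `M`, on
`(R^κ)^{⊗ι}` realized as functions of multi-indices. The result is kept in the same space, as a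
function that does not depend on the entries `p` and `q`. -/
def contract (M : Matrix κ κ R) (p q : ι) : Module.End R ((ι → κ) → R) :=
  ∑ a, ∑ b, M a b • funLeft R R fun u => update (update u p a) q b

/-- The operator `η ∘ μ` on the tensor factors `p` and `q`, for the pairing `μ (e_a ⊗ e_b) = M a b`
and the copairing `η 1 = ∑ N a b • e_a ⊗ e_b`. -/
def cupCap (M N : Matrix κ κ R) (p q : ι) : Module.End R ((ι → κ) → R) :=
  mulLeft R (fun u : ι → κ => N (u p) (u q)) * contract M p q

variable {M N M' N' : Matrix κ κ R} {p q r s : ι}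

theorem contract_apply (f : (ι → κ) → R) (u : ι → κ) :
    contract M p q f u = ∑ a, ∑ b, M a b * f (update (update u p a) q b) := by
  simp [contract, funLeft_apply]

theorem cupCap_apply (f : (ι → κ) → R) (u : ι → κ) :
    cupCap M N p q f u = N (u p) (u q) * contract M p q f u :=
  rfl

theorem contract_update_right (f : (ι → κ) → R) (u : ι → κ) (b : κ) (hpq : p ≠ q) :
    contract M p q f (update u q b) = contract M p q f u := by
  simp only [contract_apply, update_comm hpq.symm, update_idem]

theorem contract_update_left (f : (ι → κ) → R) (u : ι → κ) (a : κ) :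
    contract M p q f (update u p a) = contract M p q f u := by
  simp only [contract_apply, update_idem]

theorem contract_transpose (hpq : p ≠ q) : contract Mᵀ q p = contract M p q := by
  simp only [contract, Matrix.transpose_apply, update_comm hpq]
  exact Finset.sum_comm

theorem cupCap_transpose (hpq : p ≠ q) : cupCap Mᵀ Nᵀ q p = cupCap M N p q := by
  simp only [cupCap, contract_transpose hpq, Matrix.transpose_apply]

theorem contract_mul_cupCap_self (hpq : p ≠ q) :
    contract M p q * cupCap M' N p q = (M * Nᵀ).trace • contract M' p q := by
  ext1 f
  funext u
  simp [contract_apply (M := M), cupCap_apply, contract_update_left, contract_update_right, hpq,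
    Matrix.trace, Matrix.mul_apply, Finset.sum_mul, mul_assoc]

theorem cupCap_mul_self (hpq : p ≠ q) :
    cupCap M N p q * cupCap M N p q = (M * Nᵀ).trace • cupCap M N p q := by
  rw [cupCap, mul_assoc, ← cupCap, contract_mul_cupCap_self hpq, mul_smul_comm, cupCap]

theorem contract_right_cupCap_apply [DecidableEq κ] (hNM : N * M = 1) (hpq : p ≠ q) (hpr : p ≠ r)
    (hqr : q ≠ r) (f : (ι → κ) → R) (u : ι → κ) :
    contract M q r (cupCap M' N p q f) u = contract M' p q f (update u r (u p)) := by
  have contract_update_update (c d : κ) : contract M' p q f (update (update u q c) r d) =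
      contract M' p q f (update u r d) := by
    rw [update_comm hqr, contract_update_right _ _ _ hpq]
  calc contract M q r (cupCap M' N p q f) u
    _ = ∑ c, ∑ d, M c d * (N (u p) c * contract M' p q f (update u r d)) := by
      simp only [contract_apply (p := q), cupCap_apply, contract_update_update, update_of_ne hpr,
        update_of_ne hpq, update_of_ne hqr, update_self]
    _ = ∑ d, (N * M) (u p) d * contract M' p q f (update u r d) := by
      simp only [Matrix.mul_apply, Finset.sum_mul]
      rw [Finset.sum_comm]
      exact Finset.sum_congr rfl fun d _ => Finset.sum_congr rfl fun c _ => by ring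
    _ = contract M' p q f (update u r (u p)) := by
      simp [hNM, Matrix.one_apply]

theorem contract_mul_cupCap_mul_cupCap [DecidableEq κ] (hMN : M * N = 1) (hpq : p ≠ q)
    (hpr : p ≠ r) (hqr : q ≠ r) :
    contract M p q * (cupCap M N q r * cupCap M' N p q) = contract M' p q := by
  ext1 f
  funext u
  have hNM : N * M = 1 := mul_eq_one_comm.mp hMN
  have contract_update_update (a b : κ) :
      contract M' p q f (update (update (update u p a) q b) r a) =
        contract M' p q f (update u r a) := by
    rw [update_comm hqr, contract_update_right _ _ _ hpq, update_comm hpr, contract_update_left]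
  calc contract M p q (cupCap M N q r (cupCap M' N p q f)) u
    _ = ∑ a, ∑ b, M a b * (N b (u r) * contract M' p q f (update u r a)) := by
      simp only [contract_apply (p := p) (f := cupCap _ _ _ _ _), cupCap_apply (p := q),
        contract_right_cupCap_apply hNM hpq hpr hqr, contract_update_update, update_of_ne hpq,
        update_of_ne hpr.symm, update_of_ne hqr.symm, update_self]
    _ = ∑ a, (M * N) a (u r) * contract M' p q f (update u r a) := by
      simp only [Matrix.mul_apply, Finset.sum_mul, mul_assoc]
    _ = contract M' p q f u := by
      simp [hMN, Matrix.one_apply]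

theorem cupCap_mul_right_mul_self [DecidableEq κ] (hMN : M * N = 1) (hpq : p ≠ q)
    (hpr : p ≠ r) (hqr : q ≠ r) :
    cupCap M N p q * cupCap M N q r * cupCap M N p q = cupCap M N p q := by
  nth_rw 1 [cupCap]
  rw [mul_assoc, mul_assoc, contract_mul_cupCap_mul_cupCap hMN hpq hpr hqr, cupCap]

theorem cupCap_mul_left_mul_self [DecidableEq κ] (hMN : M * N = 1) (hpq : p ≠ q)
    (hpr : p ≠ r) (hqr : q ≠ r) :
    cupCap M N q r * cupCap M N p q * cupCap M N q r = cupCap M N q r := by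
  have hMN' : Mᵀ * Nᵀ = 1 := by
    rw [← Matrix.transpose_mul, mul_eq_one_comm.mp hMN, Matrix.transpose_one]
  -- Reversing the order of the tensor factors turns a left neighbour into a right neighbour.
  rw [← cupCap_transpose hpq, ← cupCap_transpose hqr]
  exact cupCap_mul_right_mul_self hMN' hqr.symm hpr.symm hpq.symm

theorem commute_contract (hpr : p ≠ r) (hps : p ≠ s) (hqr : q ≠ r) (hqs : q ≠ s) :
    Commute (contract M p q) (contract M' r s) := by
  have update_comm_four (u : ι → κ) (a b c d : κ) :
      update (update (update (update u p a) q b) r c) s d =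
        update (update (update (update u r c) s d) p a) q b := by
    rw [update_comm hqr, update_comm hpr, update_comm hqs, update_comm hps]
  refine Commute.sum_left _ _ _ fun a _ => Commute.sum_left _ _ _ fun b _ =>
    Commute.sum_right _ _ _ fun c _ => Commute.sum_right _ _ _ fun d _ =>
    (Commute.smul_right ?_ _).smul_left _
  ext1 f
  funext u
  exact congrArg f (update_comm_four u a b c d)

theorem commute_contract_mulLeft (hpr : p ≠ r) (hps : p ≠ s) (hqr : q ≠ r) (hqs : q ≠ s) :
    Commute (contract M p q) (mulLeft R fun u : ι → κ => N (u r) (u s)) := by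
  ext1 f
  funext u
  simp [contract_apply, update_of_ne, hpr.symm, hps.symm, hqr.symm, hqs.symm, Finset.mul_sum,
    mul_left_comm]

theorem commute_cupCap (hpr : p ≠ r) (hps : p ≠ s) (hqr : q ≠ r) (hqs : q ≠ s) :
    Commute (cupCap M N p q) (cupCap M' N' r s) := by
  have commute_mulLeft : Commute (mulLeft R fun u : ι → κ => N (u p) (u q))
      (mulLeft R fun u : ι → κ => N' (u r) (u s)) :=
    (Commute.all _ _).map (Algebra.lmul R ((ι → κ) → R))
  exact Commute.mul_left
    (commute_mulLeft.mul_right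
      (commute_contract_mulLeft hpr.symm hqr.symm hps.symm hqs.symm).symm)
    ((commute_contract_mulLeft hpr hps hqr hqs).mul_right (commute_contract hpr hps hqr hqs))

end Contraction

section TemperleyLieb

open scoped Matrix

variable {R κ : Type*} [CommSemiring R] [Fintype κ]

/-- The operator `id^{⊗i} ⊗ (η ∘ μ) ⊗ id^{⊗(n-i-2)}` on `(R^κ)^{⊗n}`: the Temperley–Lieb generator,
`0`-indexed, of the pairing `M` and the copairing `N`. -/
def cupCapAt (M N : Matrix κ κ R) (n i : ℕ) (h : i + 1 < n) : Module.End R ((Fin n → κ) → R) :=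
  cupCap M N ⟨i, Nat.lt_of_succ_lt h⟩ ⟨i + 1, h⟩

theorem stmt9_general [DecidableEq κ] {M N : Matrix κ κ R} (hMN : M * N = 1) (n : ℕ) :
    (∀ (i : ℕ) (h : i + 1 < n),
      cupCapAt M N n i h * cupCapAt M N n i h = (M * Nᵀ).trace • cupCapAt M N n i h) ∧
    (∀ (i : ℕ) (h : i + 1 + 1 < n),
      cupCapAt M N n i (Nat.lt_of_succ_lt h) * cupCapAt M N n (i + 1) h *
          cupCapAt M N n i (Nat.lt_of_succ_lt h)
        = cupCapAt M N n i (Nat.lt_of_succ_lt h)) ∧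
    (∀ (i : ℕ) (h : i + 1 + 1 < n),
      cupCapAt M N n (i + 1) h * cupCapAt M N n i (Nat.lt_of_succ_lt h) *
          cupCapAt M N n (i + 1) h
        = cupCapAt M N n (i + 1) h) ∧
    (∀ (i j : ℕ) (hi : i + 1 < n) (hj : j + 1 < n), i + 2 ≤ j ∨ j + 2 ≤ i →
      cupCapAt M N n i hi * cupCapAt M N n j hj = cupCapAt M N n j hj * cupCapAt M N n i hi) := by
  refine ⟨fun i h => cupCap_mul_self ?_, fun i h => cupCap_mul_right_mul_self hMN ?_ ?_ ?_,
    fun i h => cupCap_mul_left_mul_self hMN ?_ ?_ ?_,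
    fun i j hi hj hij => commute_cupCap ?_ ?_ ?_ ?_⟩ <;>
  exact Fin.ne_of_val_ne (by lia)

theorem TLE_eq_cupCapAt (t : ℂ) (n i : ℕ) (h : i + 1 < n) :
    TLE t n i h = cupCapAt (Matrix.of (muC t)) (Matrix.of (etaC t)) n i h :=
  rfl

theorem of_muC_mul_of_etaC {t : ℂ} (ht : t ≠ 0) : Matrix.of (muC t) * Matrix.of (etaC t) = 1 := by
  have I_mul_mul : I * t * (I * t⁻¹) = -1 := by
    rw [mul_mul_mul_comm, I_mul_I, mul_inv_cancel₀ ht, mul_one]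
  ext a b
  fin_cases a <;> fin_cases b <;>
    simp [Matrix.mul_apply, muC, etaC, I_mul_mul, mul_comm (I * t⁻¹)]

theorem trace_of_muC_mul_transpose_of_etaC (t : ℂ) :
    (Matrix.of (muC t) * (Matrix.of (etaC t))ᵀ).trace = -(t ^ 2 + t⁻¹ ^ 2) := by
  simp only [Matrix.trace, Matrix.diag_apply, Matrix.mul_apply, Matrix.transpose_apply,
    Matrix.of_apply, muC, etaC, Fin.sum_univ_two, Matrix.cons_val]
  linear_combination (t ^ 2 + t⁻¹ ^ 2) * I_sq

end TemperleyLieb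

/-- The operators `E_1, …, E_{n−1}` on `(ℂ²)^{⊗n}` (here `0`-indexed as
`TLE t n i` for `i + 1 < n`, acting on tensor positions `i, i+1`) satisfy the
Temperley–Lieb relations. -/
theorem stmt9 (t : ℂ) (ht : t ≠ 0) (hroot : ∀ k : ℕ, 0 < k → t ^ k ≠ 1) (n : ℕ)
    (hn : 1 ≤ n) :
    -- E_i² = −(t² + t⁻²) E_i
    (∀ (i : ℕ) (h : i + 1 < n),
      TLE t n i h * TLE t n i h = (-(t ^ 2 + t⁻¹ ^ 2)) • TLE t n i h) ∧
    -- E_i E_{i+1} E_i = E_i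
    (∀ (i : ℕ) (h : i + 2 < n),
      TLE t n i (by omega) * TLE t n (i + 1) h * TLE t n i (by omega)
        = TLE t n i (by omega)) ∧
    -- E_{i+1} E_i E_{i+1} = E_{i+1}
    (∀ (i : ℕ) (h : i + 2 < n),
      TLE t n (i + 1) h * TLE t n i (by omega) * TLE t n (i + 1) h
        = TLE t n (i + 1) h) ∧
    -- E_i E_j = E_j E_i for |i − j| ≥ 2
    (∀ (i j : ℕ) (hi : i + 1 < n) (hj : j + 1 < n), i + 2 ≤ j ∨ j + 2 ≤ i →
      TLE t n i hi * TLE t n j hj = TLE t n j hj * TLE t n i hi) := by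
  simpa only [TLE_eq_cupCapAt, trace_of_muC_mul_transpose_of_etaC] using
    stmt9_general (of_muC_mul_of_etaC ht) n

end
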